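/- arXiv:2505.20351 — 2 statements merged into one kernel-verified Lean document; each statement's English description precedes it below -/
import Mathlib

section
/- Let ε > 0, let Y > 0 be a real number, let Z > 0, and set X = Z·Y. Let L₁, L₂ be independent random variables with L₁, L₂ ~ Lap(2/ε), and set X̃ = X + L₁ and Ỹ = Y + L₂. Let α satisfy 0 < α < Z, and assume Z − α ≠ 1 and Z + α ≠ 1. Then P(X̃ ≤ (Z − α)·Ỹ) + P(X̃ ≥ (Z + α)·Ỹ) = (1/2 + 1/(2·((Z−α)² − 1)))·exp(−ε·α·Y/(2·(Z−α))) + (1/2 + 1/(2·((Z+α)² − 1)))·exp(−ε·α·Y/(2·(Z+α))) − ((Z² + α² − 1)/((Z² + α² − 1)² − 4·α²·Z²))·exp(−ε·α·Y/2). -/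
open MeasureTheory ProbabilityTheory Filter

/-- The Laplace distribution on `ℝ` with location `μ` and scale `b`,
given by the density `x ↦ (1/(2b)) * exp (-|x - μ| / b)`. -/
noncomputable def laplaceMeasure (μ b : ℝ) : Measure ℝ :=
  MeasureTheory.volume.withDensity
    fun x => ENNReal.ofReal ((1 / (2 * b)) * Real.exp (-|x - μ| / b))

lemma lap_setIntegral (b : ℝ) (hb : 0 < b) (f : ℝ → ℝ) {s : Set ℝ} (hs : MeasurableSet s) :
    ∫ y in s, f y ∂(laplaceMeasure 0 b) =
      ∫ y in s, (1 / (2 * b)) * Real.exp (-|y| / b) * f y := by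
  unfold laplaceMeasure
  rw [setIntegral_withDensity_eq_setIntegral_toReal_smul₀ (by fun_prop) (by simp) _ hs]
  refine integral_congr_ae (Eventually.of_forall fun y => ?_)
  simp only [smul_eq_mul, sub_zero]
  rw [ENNReal.toReal_ofReal (by positivity)]

lemma lap_real (b : ℝ) (hb : 0 < b) {s : Set ℝ} (hs : MeasurableSet s) :
    (laplaceMeasure 0 b).real s = ∫ y in s, (1 / (2 * b)) * Real.exp (-|y| / b) := by
  have := lap_setIntegral b hb (fun _ => 1) hs
  simpa using this

lemma lap_Iic_neg (b : ℝ) (hb : 0 < b) (x : ℝ) (hx : x ≤ 0) :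
    (laplaceMeasure 0 b).real (Set.Iic x) = Real.exp (x / b) / 2 := by
  rw [lap_real b hb measurableSet_Iic]
  have : ∫ y in Set.Iic x, (1 / (2 * b)) * Real.exp (-|y| / b)
      = ∫ y in Set.Iic x, (1 / (2 * b)) * Real.exp ((1 / b) * y) := by
    refine setIntegral_congr_fun measurableSet_Iic fun y hy => ?_
    have hy' : y ≤ 0 := le_trans hy hx
    simp only [abs_of_nonpos hy']
    congr 2; ring
  rw [this, integral_const_mul, integral_exp_mul_Iic (by positivity)]
  rw [show 1 / b * x = x / b by ring]
  field_simp

lemma lap_Ioi_pos (b : ℝ) (hb : 0 < b) (x : ℝ) (hx : 0 ≤ x) :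
    (laplaceMeasure 0 b).real (Set.Ioi x) = Real.exp (-x / b) / 2 := by
  rw [lap_real b hb measurableSet_Ioi]
  have : ∫ y in Set.Ioi x, (1 / (2 * b)) * Real.exp (-|y| / b)
      = ∫ y in Set.Ioi x, (1 / (2 * b)) * Real.exp ((-1 / b) * y) := by
    refine setIntegral_congr_fun measurableSet_Ioi fun y hy => ?_
    have hy' : 0 ≤ y := le_of_lt (lt_of_le_of_lt hx hy)
    simp only [abs_of_nonneg hy']
    congr 2; ring
  rw [this, integral_const_mul, integral_exp_mul_Ioi
    (by rw [neg_div]; exact neg_neg_of_pos (by positivity))]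
  rw [show -1 / b * x = -x / b by ring]
  field_simp

lemma lap_Iic_pos (b : ℝ) (hb : 0 < b) [IsProbabilityMeasure (laplaceMeasure 0 b)]
    (x : ℝ) (hx : 0 ≤ x) :
    (laplaceMeasure 0 b).real (Set.Iic x) = 1 - Real.exp (-x / b) / 2 := by
  rw [← lap_Ioi_pos b hb x hx, ← Set.compl_Iic, probReal_compl_eq_one_sub measurableSet_Iic]
  ring

lemma lap_map_neg (b : ℝ) :
    Measure.map (fun x => -x) (laplaceMeasure 0 b) = laplaceMeasure 0 b := by
  ext s hs
  rw [Measure.map_apply measurable_neg hs]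
  unfold laplaceMeasure
  rw [withDensity_apply _ (measurable_neg hs), withDensity_apply _ hs]
  rw [← (Measure.measurePreserving_neg (volume : Measure ℝ)).setLIntegral_comp_preimage hs
    (by fun_prop)]
  simp

set_option maxHeartbeats 2000000 in
lemma lap_prod (b c t : ℝ) (hb : 0 < b) (hc : 0 < c) (hc1 : c ≠ 1) (ht : 0 < t)
    [IsProbabilityMeasure (laplaceMeasure 0 b)] :
    ∫ y, (laplaceMeasure 0 b).real (Set.Iic (c * y - t)) ∂(laplaceMeasure 0 b) =
      (c ^ 2 * Real.exp (-t / (c * b)) - Real.exp (-t / b)) / (2 * (c ^ 2 - 1)) := by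
  have hint : Integrable (fun y => (laplaceMeasure 0 b).real (Set.Iic (c * y - t)))
      (laplaceMeasure 0 b) := by
    have hs : MeasurableSet {p : ℝ × ℝ | p.2 ≤ c * p.1 - t} :=
      measurableSet_le (by fun_prop) (by fun_prop)
    have h := Measure.integrable_measure_prodMk_left (μ := laplaceMeasure 0 b)
      (ν := laplaceMeasure 0 b) hs (measure_ne_top _ _)
    have e : ∀ y : ℝ, Prod.mk y ⁻¹' {p : ℝ × ℝ | p.2 ≤ c * p.1 - t} = Set.Iic (c * y - t) := by
      intro y; ext x; simp
    simp only [e] at h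
    exact h
  have htc : 0 < t / c := by positivity
  have hbc : 0 < (1 + c) / b := by positivity
  have h1c : c - 1 ≠ 0 := sub_ne_zero.mpr hc1
  rw [← integral_add_compl (measurableSet_Iic (a := (0 : ℝ))) hint, Set.compl_Iic,
    ← Set.Ioc_union_Ioi_eq_Ioi htc.le,
    setIntegral_union (Set.Ioc_disjoint_Ioi le_rfl) measurableSet_Ioi hint.integrableOn
      hint.integrableOn]
  have e1 : ∫ y in Set.Iic 0, (laplaceMeasure 0 b).real (Set.Iic (c * y - t))
      ∂(laplaceMeasure 0 b) = Real.exp (-t / b) / (4 * (1 + c)) := by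
    rw [lap_setIntegral b hb _ measurableSet_Iic]
    have : ∫ y in Set.Iic 0, (1 / (2 * b)) * Real.exp (-|y| / b) *
        (laplaceMeasure 0 b).real (Set.Iic (c * y - t))
        = ∫ y in Set.Iic 0, (Real.exp (-t / b) / (4 * b)) * Real.exp (((1 + c) / b) * y) := by
      refine setIntegral_congr_fun measurableSet_Iic fun y hy => ?_
      have hy' : y ≤ 0 := hy
      simp only [abs_of_nonpos hy']
      rw [lap_Iic_neg b hb _ (by nlinarith)]
      rw [show 1 / (2 * b) * Real.exp (- -y / b) * (Real.exp ((c * y - t) / b) / 2)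
        = (Real.exp (- -y / b) * Real.exp ((c * y - t) / b)) / (4 * b) by ring,
        show Real.exp (-t / b) / (4 * b) * Real.exp (((1 + c) / b) * y)
        = (Real.exp (-t / b) * Real.exp (((1 + c) / b) * y)) / (4 * b) by ring,
        ← Real.exp_add, ← Real.exp_add]
      congr 2; ring
    rw [this, integral_const_mul, integral_exp_mul_Iic hbc]
    simp
    field_simp
  have e2 : ∫ y in Set.Ioc 0 (t / c), (laplaceMeasure 0 b).real (Set.Iic (c * y - t))
      ∂(laplaceMeasure 0 b) =
      (Real.exp (-t / (c * b)) - Real.exp (-t / b)) / (4 * (c - 1)) := by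
    rw [lap_setIntegral b hb _ measurableSet_Ioc]
    have : ∫ y in Set.Ioc 0 (t / c), (1 / (2 * b)) * Real.exp (-|y| / b) *
        (laplaceMeasure 0 b).real (Set.Iic (c * y - t))
        = ∫ y in Set.Ioc 0 (t / c),
          (Real.exp (-t / b) / (4 * b)) * Real.exp (((c - 1) / b) * y) := by
      refine setIntegral_congr_fun measurableSet_Ioc fun y hy => ?_
      have hy' : 0 ≤ y := hy.1.le
      have hy2 : y * c ≤ t := (le_div_iff₀ hc).1 hy.2
      simp only [abs_of_nonneg hy']
      rw [lap_Iic_neg b hb _ (by nlinarith)]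
      rw [show 1 / (2 * b) * Real.exp (-y / b) * (Real.exp ((c * y - t) / b) / 2)
        = (Real.exp (-y / b) * Real.exp ((c * y - t) / b)) / (4 * b) by ring,
        show Real.exp (-t / b) / (4 * b) * Real.exp (((c - 1) / b) * y)
        = (Real.exp (-t / b) * Real.exp (((c - 1) / b) * y)) / (4 * b) by ring,
        ← Real.exp_add, ← Real.exp_add]
      congr 2; ring
    rw [this, integral_const_mul, ← intervalIntegral.integral_of_le htc.le,
      intervalIntegral.integral_comp_mul_left (fun x => Real.exp x)
        (div_ne_zero h1c hb.ne'), integral_exp]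
    have : Real.exp (-t / (c * b)) =
        Real.exp (-t / b) * Real.exp ((c - 1) / b * (t / c)) := by
      rw [← Real.exp_add]; congr 1; field_simp; ring
    rw [this]
    simp
    field_simp
  have e3 : ∫ y in Set.Ioi (t / c), (laplaceMeasure 0 b).real (Set.Iic (c * y - t))
      ∂(laplaceMeasure 0 b) =
      Real.exp (-t / (c * b)) / 2 - Real.exp (-t / (c * b)) / (4 * (1 + c)) := by
    have : ∫ y in Set.Ioi (t / c), (laplaceMeasure 0 b).real (Set.Iic (c * y - t))
        ∂(laplaceMeasure 0 b) = ∫ y in Set.Ioi (t / c), (1 - Real.exp (-(c * y - t) / b) / 2)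
        ∂(laplaceMeasure 0 b) := by
      refine setIntegral_congr_fun measurableSet_Ioi fun y hy => ?_
      have hy2 : t < y * c := (div_lt_iff₀ hc).1 hy
      exact lap_Iic_pos b hb _ (by nlinarith)
    rw [this, lap_setIntegral b hb _ measurableSet_Ioi]
    have : ∫ y in Set.Ioi (t / c), (1 / (2 * b)) * Real.exp (-|y| / b) *
        (1 - Real.exp (-(c * y - t) / b) / 2)
        = ∫ y in Set.Ioi (t / c), ((1 / (2 * b)) * Real.exp ((-1 / b) * y) -
          (Real.exp (t / b) / (4 * b)) * Real.exp ((-(1 + c) / b) * y)) := by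
      refine setIntegral_congr_fun measurableSet_Ioi fun y hy => ?_
      have hy' : 0 ≤ y := (htc.trans hy).le
      simp only [abs_of_nonneg hy']
      rw [show 1 / (2 * b) * Real.exp (-y / b) * (1 - Real.exp (-(c * y - t) / b) / 2)
        = 1 / (2 * b) * Real.exp (-y / b)
          - (Real.exp (-y / b) * Real.exp (-(c * y - t) / b)) / (4 * b) by ring,
        show Real.exp (t / b) / (4 * b) * Real.exp ((-(1 + c) / b) * y)
        = (Real.exp (t / b) * Real.exp ((-(1 + c) / b) * y)) / (4 * b) by ring,
        ← Real.exp_add, ← Real.exp_add]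
      congr 3
      · ring
      · ring_nf
    have n1 : -1 / b < 0 := by rw [neg_div]; exact neg_neg_of_pos (by positivity)
    have n2 : -(1 + c) / b < 0 := by rw [neg_div]; exact neg_neg_of_pos (by positivity)
    rw [this, integral_sub ((integrableOn_exp_mul_Ioi n1 _).const_mul _)
      ((integrableOn_exp_mul_Ioi n2 _).const_mul _), integral_const_mul, integral_const_mul,
      integral_exp_mul_Ioi n1, integral_exp_mul_Ioi n2]
    rw [show Real.exp (t / b) / (4 * b) * (-Real.exp (-(1 + c) / b * (t / c)) / (-(1 + c) / b))
      = (Real.exp (t / b) * Real.exp (-(1 + c) / b * (t / c))) / (4 * (1 + c)) by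
        field_simp, ← Real.exp_add,
      show t / b + -(1 + c) / b * (t / c) = -t / (c * b) by field_simp; ring,
      show -1 / b * (t / c) = -t / (c * b) by field_simp]
    field_simp
  rw [e1, e2, e3]
  have h1c' : 1 + c ≠ 0 := by positivity
  rw [show c ^ 2 - 1 = (c - 1) * (1 + c) by ring]
  field_simp
  ring

lemma lap_event {Ω : Type*} [MeasurableSpace Ω] (P : Measure Ω) [IsProbabilityMeasure P]
    (b c t : ℝ) (hb : 0 < b) (hc : 0 < c) (hc1 : c ≠ 1) (ht : 0 < t)
    (A B : Ω → ℝ) (hA : Measurable A) (hB : Measurable B) (hi : IndepFun A B P)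
    (hLA : Measure.map A P = laplaceMeasure 0 b) (hLB : Measure.map B P = laplaceMeasure 0 b) :
    (P {ω | A ω ≤ c * B ω - t}).toReal =
      (c ^ 2 * Real.exp (-t / (c * b)) - Real.exp (-t / b)) / (2 * (c ^ 2 - 1)) := by
  haveI : IsProbabilityMeasure (laplaceMeasure 0 b) := by
    rw [← hLA]; exact Measure.isProbabilityMeasure_map hA.aemeasurable
  have hs : MeasurableSet {p : ℝ × ℝ | p.2 ≤ c * p.1 - t} :=
    measurableSet_le (by fun_prop) (by fun_prop)
  have hmap := hi.symm.map_prod_eq_prod_map_map hB.aemeasurable hA.aemeasurable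
  rw [hLA, hLB] at hmap
  have h1 : P {ω | A ω ≤ c * B ω - t} =
      ((laplaceMeasure 0 b).prod (laplaceMeasure 0 b)) {p : ℝ × ℝ | p.2 ≤ c * p.1 - t} := by
    rw [← hmap, Measure.map_apply (by fun_prop) hs]; rfl
  rw [h1, ← lap_prod b c t hb hc hc1 ht, Measure.prod_apply hs]
  rw [← integral_toReal (measurable_measure_prodMk_left hs).aemeasurable
    (Eventually.of_forall fun _ => measure_lt_top _ _)]
  rfl

/-- **Sample accuracy of the ratio of Laplace-noised counts.**  With `X = Z·Y`,
`X̃ = X + L₁`, `Ỹ = Y + L₂` where `L₁, L₂` are independent `Lap(2/ε)` noises, the failure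
probability `P(X̃ ≤ (Z−α)Ỹ) + P(X̃ ≥ (Z+α)Ỹ)` has the stated closed form. -/
theorem laplaceNoisedCounts_sample_accuracy {Ω : Type*} [MeasurableSpace Ω]
    (P : Measure Ω) [IsProbabilityMeasure P]
    (ε Y Z α : ℝ) (hε : 0 < ε) (hY : 0 < Y) (hZ : 0 < Z)
    (hα0 : 0 < α) (hαZ : α < Z) (h₁ : Z - α ≠ 1) (h₂ : Z + α ≠ 1)
    (L₁ L₂ : Ω → ℝ) (hm₁ : Measurable L₁) (hm₂ : Measurable L₂)
    (hindep : IndepFun L₁ L₂ P)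
    (hL₁ : Measure.map L₁ P = laplaceMeasure 0 (2 / ε))
    (hL₂ : Measure.map L₂ P = laplaceMeasure 0 (2 / ε)) :
    (P {ω | Z * Y + L₁ ω ≤ (Z - α) * (Y + L₂ ω)}).toReal +
      (P {ω | (Z + α) * (Y + L₂ ω) ≤ Z * Y + L₁ ω}).toReal =
      (1 / 2 + 1 / (2 * ((Z - α) ^ 2 - 1))) * Real.exp (-(ε * α * Y) / (2 * (Z - α))) +
        (1 / 2 + 1 / (2 * ((Z + α) ^ 2 - 1))) * Real.exp (-(ε * α * Y) / (2 * (Z + α))) -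
        ((Z ^ 2 + α ^ 2 - 1) / ((Z ^ 2 + α ^ 2 - 1) ^ 2 - 4 * α ^ 2 * Z ^ 2)) *
          Real.exp (-(ε * α * Y) / 2) := by
  have hc : 0 < Z - α := sub_pos.2 hαZ
  have hd : 0 < Z + α := by positivity
  have ht : 0 < α * Y := by positivity
  have hb : 0 < 2 / ε := by positivity
  have E1 := lap_event P (2 / ε) (Z - α) (α * Y) hb hc h₁ ht L₁ L₂ hm₁ hm₂ hindep hL₁ hL₂
  have hn : ∀ L : Ω → ℝ, Measurable L → Measure.map L P = laplaceMeasure 0 (2 / ε) →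
      Measure.map (fun ω => -L ω) P = laplaceMeasure 0 (2 / ε) := by
    intro L hL h
    rw [← lap_map_neg, ← h, Measure.map_map measurable_neg hL]
    rfl
  have E2 := lap_event P (2 / ε) (Z + α) (α * Y) hb hd h₂ ht (fun ω => -L₁ ω) (fun ω => -L₂ ω)
    hm₁.neg hm₂.neg (hindep.comp measurable_neg measurable_neg) (hn _ hm₁ hL₁) (hn _ hm₂ hL₂)
  have s1 : {ω | Z * Y + L₁ ω ≤ (Z - α) * (Y + L₂ ω)} = {ω | L₁ ω ≤ (Z - α) * L₂ ω - α * Y} := by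
    ext ω
    simp only [Set.mem_setOf_eq]
    constructor <;> intro h <;> linarith
  have s2 : {ω | (Z + α) * (Y + L₂ ω) ≤ Z * Y + L₁ ω} =
      {ω | -L₁ ω ≤ (Z + α) * -L₂ ω - α * Y} := by
    ext ω
    simp only [Set.mem_setOf_eq]
    constructor <;> intro h <;> linarith
  rw [s1, s2, E1, E2]
  have x1 : -(α * Y) / ((Z - α) * (2 / ε)) = -(ε * α * Y) / (2 * (Z - α)) := by field_simp
  have x2 : -(α * Y) / ((Z + α) * (2 / ε)) = -(ε * α * Y) / (2 * (Z + α)) := by field_simp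
  have x3 : -(α * Y) / (2 / ε) = -(ε * α * Y) / 2 := by field_simp
  rw [x1, x2, x3]
  have q1 : (Z - α) ^ 2 - 1 ≠ 0 := by
    rw [show (Z - α) ^ 2 - 1 = (Z - α - 1) * (Z - α + 1) by ring]
    exact mul_ne_zero (sub_ne_zero.2 h₁) (by positivity)
  have q2 : (Z + α) ^ 2 - 1 ≠ 0 := by
    rw [show (Z + α) ^ 2 - 1 = (Z + α - 1) * (Z + α + 1) by ring]
    exact mul_ne_zero (sub_ne_zero.2 h₂) (by positivity)
  have k1 : (1 : ℝ) / 2 + 1 / (2 * ((Z - α) ^ 2 - 1)) =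
      (Z - α) ^ 2 / (2 * ((Z - α) ^ 2 - 1)) := by field_simp; ring
  have k2 : (1 : ℝ) / 2 + 1 / (2 * ((Z + α) ^ 2 - 1)) =
      (Z + α) ^ 2 / (2 * ((Z + α) ^ 2 - 1)) := by field_simp; ring
  have k3 : (Z ^ 2 + α ^ 2 - 1) / ((Z ^ 2 + α ^ 2 - 1) ^ 2 - 4 * α ^ 2 * Z ^ 2) =
      1 / (2 * ((Z - α) ^ 2 - 1)) + 1 / (2 * ((Z + α) ^ 2 - 1)) := by
    rw [show (Z ^ 2 + α ^ 2 - 1) ^ 2 - 4 * α ^ 2 * Z ^ 2 =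
      ((Z - α) ^ 2 - 1) * ((Z + α) ^ 2 - 1) by ring]
    generalize hu : (Z - α) ^ 2 - 1 = u at *
    generalize hv : (Z + α) ^ 2 - 1 = v at *
    have : Z ^ 2 + α ^ 2 - 1 = (u + v) / 2 := by rw [← hu, ← hv]; ring
    rw [this]
    field_simp
    ring
  rw [k1, k2, k3]
  ring
end

section
/- Let p_x, p_y ∈ (0,1), p = p_x/p_y, σ > 0, α ∈ (0,1), and z = Φ⁻¹(1 − α/2). Let n_x(k) and n_y(k) be sequences of positive integers tending to infinity. For each k, let X_k ~ Bin(n_x(k), p_x) and Y_k ~ Bin(n_y(k), p_y), and let L_{x,k}, L_{y,k} be Gaussian N(0, σ²) random variables, the four variables being mutually independent. Set X̃_k = X_k + L_{x,k}, Ỹ_k = Y_k + L_{y,k}, p̃_k = (X̃_k/n_x(k))/(Ỹ_k/n_y(k)), and Ṽ_k = p̃_k · √(1/X̃_k − 1/n_x(k) + 1/Ỹ_k − 1/n_y(k) + σ²·(1/X̃_k² + 1/Ỹ_k²)). Then P(|p̃_k − p| ≤ z·Ṽ_k) → 1 − α as k → ∞; that is, the conservative confidence interval accounting for the Gaussian perturbation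 variance is asymptotically valid. -/
open MeasureTheory ProbabilityTheory Filter

/-- The binomial distribution `Bin(n, p)` as a measure on `ℝ`
(the law of the number of successes in `n` independent trials with success probability `p`). -/
noncomputable def binomialReal (n : ℕ) (p : ℝ) (hp : p ≤ 1) : Measure ℝ :=
  ((PMF.binomial (Real.toNNReal p) (Real.toNNReal_le_one.mpr hp) n).toMeasure).map
    (fun i : Fin (n + 1) => ((i : ℕ) : ℝ))

open scoped Topology

lemma rr_charFun_binomialReal (n : ℕ) (p : ℝ) (h0 : 0 ≤ p) (hp : p ≤ 1) (t : ℝ) :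
    charFun (binomialReal n p hp) t
      = ((1 - p : ℂ) + p * Complex.exp (t * Complex.I)) ^ n := by
  rw [binomialReal, charFun_apply_real, integral_map (by fun_prop) (by fun_prop),
    PMF.integral_eq_sum]
  rw [add_comm (1 - p : ℂ), add_pow, Finset.sum_range]
  refine Finset.sum_congr rfl fun i _ => ?_
  have hi : (i : ℕ) ≤ n := Nat.lt_succ_iff.mp i.2
  have : ((PMF.binomial (Real.toNNReal p) (Real.toNNReal_le_one.mpr hp) n) i).toReal
      = p ^ (i : ℕ) * (1 - p) ^ (n - (i : ℕ)) * (n.choose i) := by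
    rw [PMF.binomial_apply]
    simp only [ENNReal.toReal_mul, ENNReal.toReal_pow, ENNReal.coe_toReal, ENNReal.toReal_natCast,
      Real.coe_toNNReal p h0, Fin.val_last]
    congr 3
    rw [ENNReal.toReal_sub_of_le (by simpa using hp) (by simp)]
    simp [h0]
  rw [this, mul_pow, ← Complex.exp_nat_mul]
  rw [Complex.real_smul]
  push_cast
  rw [show (t : ℂ) * (i : ℕ) * Complex.I = (i : ℕ) * (t * Complex.I) by ring]
  ring

lemma rr_clt {Ω : Type*} [MeasurableSpace Ω] (P : Measure Ω) [IsProbabilityMeasure P]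
    (p : ℝ) (hp : p ∈ Set.Ioo (0 : ℝ) 1) (n : ℕ → ℕ) (hn : Tendsto n atTop atTop)
    (X : ℕ → Ω → ℝ) (hm : ∀ k, Measurable (X k))
    (hlaw : ∀ k, Measure.map (X k) P = binomialReal (n k) p hp.2.le) :
    TendstoInDistribution (fun k ω => (√(n k))⁻¹ * ((X k ω - n k * p) / √(p * (1 - p))))
      atTop (id : ℝ → ℝ) (fun _ => P) (gaussianReal 0 1) where
  forall_aemeasurable k := by have := hm k; fun_prop
  tendsto := by
    obtain ⟨h0, h1⟩ := hp
    have hv : 0 < p * (1 - p) := mul_pos h0 (by linarith)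
    set s := √(p * (1 - p)) with hs
    have hs0 : s ≠ 0 := (Real.sqrt_pos.2 hv).ne'
    have hs2 : s ^ 2 = p * (1 - p) := Real.sq_sqrt hv.le
    refine ProbabilityMeasure.tendsto_iff_tendsto_charFun.2 fun t ↦ ?_
    let Q : Measure ℝ := binomialReal 1 p h1.le
    have : IsProbabilityMeasure Q := by
      dsimp only [Q, binomialReal]
      exact Measure.isProbabilityMeasure_map (by fun_prop)
    have hint : ∀ f : ℝ → ℝ, Measurable f → ∫ x, f x ∂Q = (1 - p) * f 0 + p * f 1 := by
      intro f hf
      dsimp only [Q, binomialReal]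
      rw [integral_map (by fun_prop) hf.aestronglyMeasurable, PMF.integral_eq_sum, Fin.sum_univ_two]
      simp [PMF.binomial_apply, h0.le]
      rw [ENNReal.toReal_sub_of_le (by simpa using h1.le) (by simp)]
      simp [h0.le]
    have key := tendsto_charFun_inv_sqrt_mul_pow (P := Q) (X := fun x => s⁻¹ * (x + -p))
      (by fun_prop) (by rw [hint _ (by fun_prop)]; ring)
      (by
        have := hint ((fun x => s⁻¹ * (x + -p)) ^ 2) (by fun_prop)
        rw [this]
        simp only [Pi.pow_apply]
        field_simp
        rw [hs2]; ring) t
    have e : charFun (Measure.map id (gaussianReal 0 1)) t = Complex.exp (- t ^ 2 / 2) := by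
      rw [Measure.map_id, charFun_gaussianReal]; simp [neg_div]
    simp only [ProbabilityMeasure.coe_mk]
    rw [e]
    refine (key.comp hn).congr fun k => ?_
    simp only [Function.comp]
    have a1 : ∀ (μ : Measure ℝ) (c d u : ℝ), charFun (μ.map (fun x => c * (x + d))) u
        = charFun μ (c * u) * Complex.exp (c * u * d * Complex.I) := by
      intro μ c d u
      rw [charFun_map_mul_comp (by fun_prop), charFun_map_add_const]
      simp [mul_comm, mul_left_comm]
    have a2 : Measure.map (fun ω => (√(n k))⁻¹ * ((X k ω - n k * p) / s)) P
        = (binomialReal (n k) p h1.le).map (fun x => ((√(n k))⁻¹ * s⁻¹) * (x + (- (n k * p)))) := by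
      rw [← hlaw k, Measure.map_map (by fun_prop) (hm k)]
      congr 1; ext ω; simp only [Function.comp]; ring
    rw [a2, a1, a1, rr_charFun_binomialReal _ _ h0.le, rr_charFun_binomialReal _ _ h0.le, pow_one,
      mul_pow, ← Complex.exp_nat_mul]
    push_cast
    congr 2
    · ring_nf
    · ring_nf

lemma rr_small {Ω : Type*} [MeasurableSpace Ω] (P : Measure Ω) [IsProbabilityMeasure P]
    {μ : Measure ℝ} [IsProbabilityMeasure μ]
    (W : ℕ → Ω → ℝ) (h : TendstoInDistribution W atTop (id : ℝ → ℝ) (fun _ => P) μ)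
    (c : ℕ → ℝ) (hc : Tendsto c atTop (𝓝 0)) :
    TendstoInMeasure P (fun k ω => c k * W k ω) atTop (fun _ => (0 : ℝ)) := by
  have h1 := h.continuous_comp_prodMk_of_tendstoInMeasure_const
    (g := fun x : ℝ × ℝ => x.2 * x.1) (by fun_prop) (Y := fun k _ => c k) (c := 0)
    (tendstoInMeasure_of_tendsto_ae (fun _ => by fun_prop) (by simpa using hc))
    (fun _ => by fun_prop)
  rw [tendstoInMeasure_iff_norm]
  intro ε hε
  have hfr : frontier {x : ℝ | ε ≤ ‖x‖} ⊆ {x | ε = ‖x‖} :=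
    frontier_le_subset_eq continuous_const continuous_norm
  have e : ∀ S : Set ℝ, MeasurableSet S → (0 : ℝ) ∉ S → (μ.map (fun ω : ℝ => 0 * id ω)) S = 0 := by
    intro S hS h0
    rw [Measure.map_apply (by fun_prop) hS]
    simp [h0]
  have h2 := ProbabilityMeasure.tendsto_measure_of_null_frontier_of_tendsto' h1.tendsto
    (E := {x : ℝ | ε ≤ ‖x‖}) (e _ measurableSet_frontier fun hh => by
      have := hfr hh; simp at this; exact hε.ne' this)
  simp only [ProbabilityMeasure.coe_mk] at h2
  have hS : MeasurableSet {x : ℝ | ε ≤ ‖x‖} := measurableSet_le (by fun_prop) (by fun_prop)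
  rw [e _ hS (by simpa using hε)] at h2
  refine h2.congr fun k => ?_
  rw [Measure.map_apply_of_aemeasurable (h1.forall_aemeasurable k) hS]
  simp

lemma rr_comb {Ω : Type*} [MeasurableSpace Ω] (P : Measure Ω) [IsProbabilityMeasure P]
    (U V : ℕ → Ω → ℝ) (hU : TendstoInDistribution U atTop (id : ℝ → ℝ) (fun _ => P) (gaussianReal 0 1))
    (hV : TendstoInDistribution V atTop (id : ℝ → ℝ) (fun _ => P) (gaussianReal 0 1))
    (hUV : ∀ k, IndepFun (U k) (V k) P)
    (a b : ℕ → ℝ) (a0 b0 : ℝ) (ha : Tendsto a atTop (𝓝 a0)) (hb : Tendsto b atTop (𝓝 b0))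
    (hab : a0 ^ 2 + b0 ^ 2 = 1) :
    TendstoInDistribution (fun k ω => a k * U k ω + b k * V k ω) atTop
      (id : ℝ → ℝ) (fun _ => P) (gaussianReal 0 1) where
  forall_aemeasurable k := by
    have := hU.forall_aemeasurable k
    have := hV.forall_aemeasurable k
    fun_prop
  tendsto := by
    have aux : ∀ (W : ℕ → Ω → ℝ)
        (hW : TendstoInDistribution W atTop (id : ℝ → ℝ) (fun _ => P) (gaussianReal 0 1))
        (c : ℕ → ℝ) (c0 : ℝ) (hc : Tendsto c atTop (𝓝 c0)) (t : ℝ),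
        Tendsto (fun k => charFun (P.map (fun ω => c k * W k ω)) t) atTop
          (𝓝 (Complex.exp (- (c0 * t) ^ 2 / 2))) := by
      intro W hW c c0 hc t
      have h1 := hW.continuous_comp_prodMk_of_tendstoInMeasure_const
        (g := fun x : ℝ × ℝ => x.2 * x.1) (by fun_prop) (Y := fun k _ => c k) (c := c0)
        (tendstoInMeasure_of_tendsto_ae (fun _ => by fun_prop) (by simpa using hc))
        (fun _ => by fun_prop)
      have h2 := ProbabilityMeasure.tendsto_iff_tendsto_charFun.1 h1.tendsto t
      simp only [ProbabilityMeasure.coe_mk] at h2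
      convert h2 using 2
      simp only [id]
      rw [charFun_map_mul, charFun_gaussianReal]
      simp [neg_div]
    refine ProbabilityMeasure.tendsto_iff_tendsto_charFun.2 fun t ↦ ?_
    simp only [ProbabilityMeasure.coe_mk]
    have e : charFun (Measure.map id (gaussianReal 0 1)) t
        = Complex.exp (- (a0 * t) ^ 2 / 2) * Complex.exp (- (b0 * t) ^ 2 / 2) := by
      rw [Measure.map_id, charFun_gaussianReal, ← Complex.exp_add]
      have : (a0 : ℂ) ^ 2 + b0 ^ 2 = 1 := by exact_mod_cast hab
      congr 1
      simp
      linear_combination (t : ℂ) ^ 2 / 2 * this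
    rw [e]
    refine ((aux U hU a a0 ha t).mul (aux V hV b b0 hb t)).congr fun k => ?_
    have mU := hU.forall_aemeasurable k
    have mV := hV.forall_aemeasurable k
    have hi : IndepFun (fun ω => a k * U k ω) (fun ω => b k * V k ω) P :=
      (hUV k).comp (φ := fun x => a k * x) (ψ := fun x => b k * x) (by fun_prop) (by fun_prop)
    have := hi.charFun_map_add_eq_mul (by fun_prop) (by fun_prop)
    exact (congrFun this t).symm

lemma rr_gauss (z α : ℝ) (hα : α ∈ Set.Ioo (0 : ℝ) 1)
    (hz : cdf (gaussianReal 0 1) z = 1 - α / 2) :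
    0 < z ∧ (gaussianReal 0 1).real {x : ℝ | |x| ≤ z} = 1 - α := by
  have : NullSingletonClass (gaussianReal 0 1) := nullSingletonClass_gaussianReal (by simp)
  have hsymm : ∀ S : Set ℝ, MeasurableSet S →
      (gaussianReal 0 1).real S = (gaussianReal 0 1).real ((fun x => -x) ⁻¹' S) := by
    intro S hS
    have := gaussianReal_map_neg (μ := 0) (v := 1)
    rw [neg_zero] at this
    conv_lhs => rw [← this]
    rw [map_measureReal_apply (by fun_prop) hS]
  have hc : ∀ x, cdf (gaussianReal 0 1) (-x) = 1 - cdf (gaussianReal 0 1) x := by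
    intro x
    rw [cdf_eq_real, cdf_eq_real, ← probReal_compl_eq_one_sub measurableSet_Iic,
      hsymm _ measurableSet_Iic]
    have : ((fun x : ℝ => -x) ⁻¹' Set.Iic (-x)) = Set.Ici x := by ext; simp
    rw [this, Set.compl_Iic]
    exact (measureReal_congr Ioi_ae_eq_Ici).symm
  have hz0 : 0 < z := by
    by_contra! h
    have h1 := monotone_cdf (gaussianReal 0 1) (show z ≤ -z by linarith)
    rw [hc, hz] at h1
    linarith [hα.2]
  refine ⟨hz0, ?_⟩
  have e : {x : ℝ | |x| ≤ z} = Set.Icc (-z) z := by ext; simp [abs_le]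
  rw [e, ← measureReal_congr Ioc_ae_eq_Icc, ← Set.Iic_sdiff_Iic, 
    measureReal_diff (Set.Iic_subset_Iic.2 (by linarith)) measurableSet_Iic, ← cdf_eq_real,
    ← cdf_eq_real, hc, hz]
  ring

lemma rr_sqrt_c (p : ℝ) (h0 : 0 < p) : √(p * (1 - p)) = p * √(1 / p - 1) := by
  rw [← Real.sqrt_sq h0.le, ← Real.sqrt_mul (sq_nonneg _), Real.sqrt_sq h0.le]
  congr 1
  field_simp

lemma rr_half (p n X L s : ℝ) (h0 : 0 < p) (h1 : p < 1) (hn : 0 < n) (hs : 0 < s) :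
    √(1 / p - 1) / (√n * s) * ((√n)⁻¹ * ((X - n * p) / √(p * (1 - p)))) +
      √(1 / p - 1) / (√n * s) * (((√n)⁻¹ * L) / (p * √(1 / p - 1)))
      = ((X + L) / n - p) / (s * p) := by
  have hc : 0 < √(1 / p - 1) := Real.sqrt_pos.2 (by
    rw [sub_pos, lt_div_iff₀ h0]; linarith)
  rw [rr_sqrt_c p h0]
  have hr : 0 < √n := Real.sqrt_pos.2 hn
  have hr2 : √n ^ 2 = n := Real.sq_sqrt hn.le
  generalize √(1 / p - 1) = c at *
  generalize √n = r at *
  subst hr2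
  field_simp
  ring

lemma rr_mean (p n X L : ℝ) (h0 : 0 < p) (h1 : p < 1) (hn : 0 < n) :
    (X + L) / n = p + √(p * (1 - p)) * ((√n)⁻¹ * ((√n)⁻¹ * ((X - n * p) / √(p * (1 - p)))))
      + (√n)⁻¹ * ((√n)⁻¹ * L) := by
  have hc : 0 < √(p * (1 - p)) := Real.sqrt_pos.2 (mul_pos h0 (by linarith))
  have hr : 0 < √n := Real.sqrt_pos.2 hn
  have hr2 : √n ^ 2 = n := Real.sq_sqrt hn.le
  generalize √(p * (1 - p)) = c at *
  generalize √n = r at *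
  subst hr2
  field_simp
  ring

lemma rr_alg (px py n m X Y Lx Ly s : ℝ) (hx0 : 0 < px) (hx1 : px < 1) (hy0 : 0 < py) (hy1 : py < 1)
    (hn : 0 < n) (hm : 0 < m) (hs : 0 < s) (hy : (Y + Ly) / m ≠ 0) :
    ((X + Lx) / n / ((Y + Ly) / m) - px / py) / (px / py * s) =
      ((√(1 / px - 1) / (√n * s) * ((√n)⁻¹ * ((X - n * px) / √(px * (1 - px))))
        + -(√(1 / py - 1) / (√m * s)) * ((√m)⁻¹ * ((Y - m * py) / √(py * (1 - py)))))
      + (√(1 / px - 1) / (√n * s) * (((√n)⁻¹ * Lx) / (px * √(1 / px - 1)))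
        - √(1 / py - 1) / (√m * s) * (((√m)⁻¹ * Ly) / (py * √(1 / py - 1)))))
      * (py / ((Y + Ly) / m)) := by
  have e1 := rr_half px n X Lx s hx0 hx1 hn hs
  have e2 := rr_half py m Y Ly s hy0 hy1 hm hs
  have e3 : ∀ a b c d : ℝ, (a + -(√(1 / py - 1) / (√m * s)) * b) + (c - d)
      = (a + c) - (√(1 / py - 1) / (√m * s) * b + d) := by intros; ring
  rw [e3, e1, e2]
  generalize (X + Lx) / n = A at *
  generalize (Y + Ly) / m = B at *
  field_simp
  ring

/-- Variance ratio identity. -/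
lemma rr_var (px py n m x y s σ : ℝ) (hx0 : 0 < px) (hx1 : px < 1) (hy0 : 0 < py) (hy1 : py < 1)
    (hn : 0 < n) (hm : 0 < m) (hs : 0 < s) (hx : x / n ≠ 0) (hy : y / m ≠ 0) :
    √(1 / x - 1 / n + 1 / y - 1 / m + σ ^ 2 * (1 / x ^ 2 + 1 / y ^ 2)) / s =
    √((√(1 / px - 1) / (√n * s)) ^ 2 *
        ((1 / (x / n) - 1) / (1 / px - 1) + σ ^ 2 / ((x / n) ^ 2 * (1 / px - 1)) * n⁻¹)
      + (√(1 / py - 1) / (√m * s)) ^ 2 *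
        ((1 / (y / m) - 1) / (1 / py - 1) + σ ^ 2 / ((y / m) ^ 2 * (1 / py - 1)) * m⁻¹)) := by
  have hcx : 0 < 1 / px - 1 := by rw [sub_pos, lt_div_iff₀ hx0]; linarith
  have hcy : 0 < 1 / py - 1 := by rw [sub_pos, lt_div_iff₀ hy0]; linarith
  have hx' : x ≠ 0 := fun h => hx (by simp [h])
  have hy' : y ≠ 0 := fun h => hy (by simp [h])
  conv_lhs => rw [← Real.sqrt_sq hs.le, ← Real.sqrt_div' _ (sq_nonneg s)]
  congr 1
  rw [div_pow √(1 / px - 1), div_pow √(1 / py - 1), mul_pow √n, mul_pow √m, Real.sq_sqrt hcx.le,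
    Real.sq_sqrt hcy.le, Real.sq_sqrt hn.le, Real.sq_sqrt hm.le]
  generalize 1 / px - 1 = cx at *
  generalize 1 / py - 1 = cy at *
  field_simp
  ring

lemma rr_ab (cx cy n m : ℝ) (hx : 0 < cx) (hy : 0 < cy) (hn : 0 < n) (hm : 0 < m) :
    (√cx / (√n * √(cx / n + cy / m))) ^ 2 + (√cy / (√m * √(cx / n + cy / m))) ^ 2 = 1 := by
  have : 0 < cx / n + cy / m := by positivity
  rw [div_pow, div_pow, mul_pow, mul_pow, Real.sq_sqrt hx.le, Real.sq_sqrt hy.le,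
    Real.sq_sqrt hn.le, Real.sq_sqrt hm.le, Real.sq_sqrt this.le]
  field_simp

lemma rr_core {Ω : Type*} [MeasurableSpace Ω]
    (P : Measure Ω) [IsProbabilityMeasure P]
    (px py σ α z : ℝ) (hpx : px ∈ Set.Ioo (0 : ℝ) 1) (hpy : py ∈ Set.Ioo (0 : ℝ) 1)
    (hα : α ∈ Set.Ioo (0 : ℝ) 1)
    (hz : cdf (gaussianReal 0 1) z = 1 - α / 2)
    (nx ny : ℕ → ℕ) (hnx : ∀ k, 0 < nx k) (hny : ∀ k, 0 < ny k)
    (hnxTop : Tendsto nx atTop atTop) (hnyTop : Tendsto ny atTop atTop)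
    (X Y Lx Ly : ℕ → Ω → ℝ)
    (hmX : ∀ k, Measurable (X k)) (hmY : ∀ k, Measurable (Y k))
    (hmLx : ∀ k, Measurable (Lx k)) (hmLy : ∀ k, Measurable (Ly k))
    (hlawX : ∀ k, Measure.map (X k) P = binomialReal (nx k) px hpx.2.le)
    (hlawY : ∀ k, Measure.map (Y k) P = binomialReal (ny k) py hpy.2.le)
    (hindep : ∀ k, IndepFun (X k) (Y k) P)
    (s a b : ℕ → ℝ) (hs : ∀ k, 0 < s k)
    (ha : ∀ k, a k = √(1 / px - 1) / (√(nx k) * s k))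
    (hb : ∀ k, b k = √(1 / py - 1) / (√(ny k) * s k))
    (hab : ∀ k, a k ^ 2 + b k ^ 2 = 1)
    (a0 b0 : ℝ) (ha0 : Tendsto a atTop (𝓝 a0)) (hb0 : Tendsto b atTop (𝓝 b0))
    (hU : ∀ᵐ ω ∂P, Tendsto (fun k => (√(nx k))⁻¹ * ((√(nx k))⁻¹ *
      ((X k ω - nx k * px) / √(px * (1 - px))))) atTop (𝓝 0))
    (hV : ∀ᵐ ω ∂P, Tendsto (fun k => (√(ny k))⁻¹ * ((√(ny k))⁻¹ *
      ((Y k ω - ny k * py) / √(py * (1 - py))))) atTop (𝓝 0))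
    (hLx : ∀ᵐ ω ∂P, Tendsto (fun k => (√(nx k))⁻¹ * Lx k ω) atTop (𝓝 0))
    (hLy : ∀ᵐ ω ∂P, Tendsto (fun k => (√(ny k))⁻¹ * Ly k ω) atTop (𝓝 0)) :
    Tendsto
      (fun k =>
        (P {ω |
          |((X k ω + Lx k ω) / (nx k : ℝ)) / ((Y k ω + Ly k ω) / (ny k : ℝ)) - px / py| ≤
            z * (((X k ω + Lx k ω) / (nx k : ℝ)) / ((Y k ω + Ly k ω) / (ny k : ℝ)) *
              Real.sqrt (1 / (X k ω + Lx k ω) - 1 / (nx k : ℝ) +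
                1 / (Y k ω + Ly k ω) - 1 / (ny k : ℝ) +
                σ ^ 2 * (1 / (X k ω + Lx k ω) ^ 2 + 1 / (Y k ω + Ly k ω) ^ 2)))}).toReal)
      atTop (nhds (1 - α)) := by
  obtain ⟨hx0, hx1⟩ := id hpx
  obtain ⟨hy0, hy1⟩ := id hpy
  have hcx : 0 < 1 / px - 1 := by rw [sub_pos, lt_div_iff₀ hx0]; linarith
  have hcy : 0 < 1 / py - 1 := by rw [sub_pos, lt_div_iff₀ hy0]; linarith
  have hp : 0 < px / py := div_pos hx0 hy0
  have hab0 : a0 ^ 2 + b0 ^ 2 = 1 :=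
    tendsto_nhds_unique ((ha0.pow 2).add (hb0.pow 2)) (by simp [hab])
  have hnR : ∀ k, (0 : ℝ) < nx k := fun k => by exact_mod_cast hnx k
  have hmR : ∀ k, (0 : ℝ) < ny k := fun k => by exact_mod_cast hny k
  have hnT : Tendsto (fun k => (nx k : ℝ)) atTop atTop := tendsto_natCast_atTop_atTop.comp hnxTop
  have hmT : Tendsto (fun k => (ny k : ℝ)) atTop atTop := tendsto_natCast_atTop_atTop.comp hnyTop
  have hrn : Tendsto (fun k => (√(nx k))⁻¹) atTop (𝓝 0) :=
    tendsto_inv_atTop_zero.comp (Real.tendsto_sqrt_atTop.comp hnT)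
  have hrm : Tendsto (fun k => (√(ny k))⁻¹) atTop (𝓝 0) :=
    tendsto_inv_atTop_zero.comp (Real.tendsto_sqrt_atTop.comp hmT)
  have hin : Tendsto (fun k => ((nx k : ℝ))⁻¹) atTop (𝓝 0) := tendsto_inv_atTop_zero.comp hnT
  have him : Tendsto (fun k => ((ny k : ℝ))⁻¹) atTop (𝓝 0) := tendsto_inv_atTop_zero.comp hmT
  -- the leading term
  have hD := rr_comb P _ _ (rr_clt P px hpx nx hnxTop X hmX hlawX)
    (rr_clt P py hpy ny hnyTop Y hmY hlawY)
    (fun k => (hindep k).comp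
      (φ := fun x => (√(nx k))⁻¹ * ((x - nx k * px) / √(px * (1 - px))))
      (ψ := fun x => (√(ny k))⁻¹ * ((x - ny k * py) / √(py * (1 - py))))
      (by fun_prop) (by fun_prop)) a (fun k => - b k) a0 (-b0) ha0 hb0.neg (by simpa using hab0)
  -- the remainder terms
  let A : ℕ → Ω → ℝ := fun k ω => (X k ω + Lx k ω) / (nx k : ℝ)
  let B : ℕ → Ω → ℝ := fun k ω => (Y k ω + Ly k ω) / (ny k : ℝ)
  let D0 : ℕ → Ω → ℝ := fun k ω =>
    a k * ((√(nx k))⁻¹ * ((X k ω - nx k * px) / √(px * (1 - px)))) +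
      (- b k) * ((√(ny k))⁻¹ * ((Y k ω - ny k * py) / √(py * (1 - py))))
  let R : ℕ → Ω → ℝ := fun k ω => a k * (((√(nx k))⁻¹ * Lx k ω) / (px * √(1 / px - 1)))
        - b k * (((√(ny k))⁻¹ * Ly k ω) / (py * √(1 / py - 1)))
  let w : ℕ → Ω → ℝ := fun k ω => py / B k ω
  let D1 : ℕ → Ω → ℝ := fun k ω => (A k ω / B k ω - px / py) / (px / py * s k)
  let e : ℕ → Ω → ℝ := fun k ω => D1 k ω - (D0 k ω + R k ω) * w k ω
  let Q : ℕ → Ω → ℝ := fun k ω => (A k ω / B k ω) / (px / py) *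
    (√(1 / (X k ω + Lx k ω) - 1 / (nx k : ℝ) +
                1 / (Y k ω + Ly k ω) - 1 / (ny k : ℝ) +
                σ ^ 2 * (1 / (X k ω + Lx k ω) ^ 2 + 1 / (Y k ω + Ly k ω) ^ 2)) / s k)
  have hmeas : ∀ k, Measurable (fun ω => (R k ω, w k ω, e k ω, Q k ω)) := by
    intro k
    have := hmX k
    have := hmY k
    have := hmLx k
    have := hmLy k
    dsimp only [R, w, e, Q, D1, D0, A, B]
    fun_prop
  have hae : ∀ᵐ ω ∂P, Tendsto (fun k => (R k ω, w k ω, e k ω, Q k ω)) atTop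
      (𝓝 ((0 : ℝ), (1 : ℝ), (0 : ℝ), (1 : ℝ))) := by
    filter_upwards [hU, hV, hLx, hLy] with ω hu hv hlx hly
    have hA : Tendsto (fun k => A k ω) atTop (𝓝 px) := by
      have := ((hu.const_mul √(px * (1 - px))).const_add px).add (hrn.mul hlx)
      simp only [mul_zero, add_zero] at this
      exact this.congr fun k => (rr_mean px _ _ _ hx0 hx1 (hnR k)).symm
    have hB : Tendsto (fun k => B k ω) atTop (𝓝 py) := by
      have := ((hv.const_mul √(py * (1 - py))).const_add py).add (hrm.mul hly)
      simp only [mul_zero, add_zero] at this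
      exact this.congr fun k => (rr_mean py _ _ _ hy0 hy1 (hmR k)).symm
    have hA0 : ∀ᶠ k in atTop, A k ω ≠ 0 := hA.eventually_ne hx0.ne'
    have hB0 : ∀ᶠ k in atTop, B k ω ≠ 0 := hB.eventually_ne hy0.ne'
    have hR : Tendsto (fun k => R k ω) atTop (𝓝 0) := by
      have := (ha0.mul (hlx.div_const (px * √(1 / px - 1)))).sub
        (hb0.mul (hly.div_const (py * √(1 / py - 1))))
      simp only [zero_div, mul_zero, sub_zero] at this
      exact this
    have hw : Tendsto (fun k => w k ω) atTop (𝓝 1) := by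
      have := (tendsto_const_nhds (x := py)).div hB hy0.ne'
      rwa [div_self hy0.ne'] at this
    have he : Tendsto (fun k => e k ω) atTop (𝓝 0) := by
      refine tendsto_const_nhds.congr' ?_
      filter_upwards [hB0] with k hk
      have := rr_alg px py (nx k) (ny k) (X k ω) (Y k ω) (Lx k ω) (Ly k ω) (s k)
        hx0 hx1 hy0 hy1 (hnR k) (hmR k) (hs k) hk
      rw [← ha k, ← hb k] at this
      exact (sub_eq_zero.2 this).symm
    have hQ : Tendsto (fun k => Q k ω) atTop (𝓝 1) := by
      have half : ∀ (p : ℝ) (C : ℕ → ℝ) (i : ℕ → ℝ), 0 < p → 0 < 1 / p - 1 →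
          Tendsto C atTop (𝓝 p) → Tendsto i atTop (𝓝 0) →
          Tendsto (fun k => (1 / C k - 1) / (1 / p - 1) + σ ^ 2 / (C k ^ 2 * (1 / p - 1)) * i k)
            atTop (𝓝 1) := by
        intro p C i hp hc hC hi
        have t1 := (((tendsto_const_nhds (x := (1 : ℝ))).div hC hp.ne').sub_const 1).div_const
          (1 / p - 1)
        have t2 := ((tendsto_const_nhds (x := σ ^ 2)).div ((hC.pow 2).mul_const (1 / p - 1))
          (by positivity)).mul hi
        have := t1.add t2
        rwa [div_self hc.ne', mul_zero, add_zero] at this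
      have h1 := half px _ _ hx0 hcx hA hin
      have h2 := half py _ _ hy0 hcy hB him
      have h3 := (((ha0.pow 2).mul h1).add ((hb0.pow 2).mul h2)).sqrt
      rw [mul_one, mul_one, hab0, Real.sqrt_one] at h3
      have h4 := ((hA.div hB hy0.ne').div_const (px / py)).mul h3
      rw [div_self hp.ne', mul_one] at h4
      refine h4.congr' ?_
      filter_upwards [hA0, hB0] with k hk1 hk2
      have := rr_var px py (nx k) (ny k) (X k ω + Lx k ω) (Y k ω + Ly k ω) (s k) σ
        hx0 hx1 hy0 hy1 (hnR k) (hmR k) (hs k) hk1 hk2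
      rw [← ha k, ← hb k] at this
      dsimp only [Q]
      rw [this]
      rfl
    exact hR.prodMk_nhds (hw.prodMk_nhds (he.prodMk_nhds hQ))
  have hT := hD.continuous_comp_prodMk_of_tendstoInMeasure_const
    (g := fun x : ℝ × (ℝ × ℝ × ℝ × ℝ) =>
      |(x.1 + x.2.1) * x.2.2.1 + x.2.2.2.1| - z * x.2.2.2.2) (by fun_prop)
    (tendstoInMeasure_of_tendsto_ae (fun k => (hmeas k).aestronglyMeasurable) hae)
    (fun k => (hmeas k).aemeasurable)
  obtain ⟨hz0, hgz⟩ := rr_gauss z α hα hz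
  have : NullSingletonClass (gaussianReal 0 1) := nullSingletonClass_gaussianReal (by simp)
  have hlim := ProbabilityMeasure.tendsto_measure_of_null_frontier_of_tendsto' hT.tendsto
    (E := Set.Iic 0) (by
      rw [frontier_Iic]
      simp only [ProbabilityMeasure.coe_mk]
      rw [Measure.map_apply (by fun_prop) (measurableSet_singleton 0)]
      refine measure_mono_null (t := {z, -z}) ?_ (Set.Finite.measure_zero (by simp) _)
      intro x hx
      simp only [id, add_zero, mul_one, Set.mem_preimage, Set.mem_singleton_iff] at hx
      have : |x| = z := by linarith
      rcases abs_choice x with h | h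
      · left; linarith
      · right; simp only [Set.mem_singleton_iff]; linarith)
  simp only [ProbabilityMeasure.coe_mk] at hlim
  rw [Measure.map_apply (by fun_prop) measurableSet_Iic] at hlim
  have hset : ((fun ω : ℝ => |(id ω + 0) * 1 + 0| - z * 1) ⁻¹' Set.Iic 0) = {x : ℝ | |x| ≤ z} := by
    ext x; simp
  rw [hset] at hlim
  have hfin := (ENNReal.tendsto_toReal (measure_ne_top (gaussianReal 0 1) _)).comp hlim
  rw [← Measure.real, hgz] at hfin
  refine hfin.congr fun k => ?_
  simp only [Function.comp]
  rw [Measure.map_apply_of_aemeasurable (hT.forall_aemeasurable k) measurableSet_Iic]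
  congr 2
  ext ω
  simp only [Set.mem_preimage, Set.mem_Iic, Set.mem_setOf_eq]
  have hps : 0 < px / py * s k := mul_pos hp (hs k)
  have e1 : (D0 k ω + R k ω) * w k ω + e k ω = D1 k ω := by simp only [e]; ring
  change |(D0 k ω + R k ω) * w k ω + e k ω| - z * Q k ω ≤ 0 ↔ _
  rw [e1]
  dsimp only [D1, Q, A, B]
  generalize √(_) = S
  rw [abs_div, abs_of_pos hps, sub_nonpos, div_le_iff₀ hps]
  have hs' := hs k
  have : ∀ c : ℝ, z * (c / (px / py) * (S / s k)) * (px / py * s k) = z * (c * S) := by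
    intro c; field_simp
  rw [this]

/-- **Asymptotically valid conservative confidence interval for the relative risk with the
Gaussian mechanism.**  With `z = Φ⁻¹(1 − α/2)` and independent `N(0, σ²)` noises added
to the binomial counts, the conservative interval `p̃_k ± z·Ṽ_k`, whose width also
accounts for the Gaussian perturbation variance, has asymptotic coverage `1 − α`. -/
theorem relative_risk_CI_valid_gaussian_conservative {Ω : Type*} [MeasurableSpace Ω]
    (P : Measure Ω) [IsProbabilityMeasure P]
    (px py σ α z : ℝ) (hpx : px ∈ Set.Ioo (0 : ℝ) 1) (hpy : py ∈ Set.Ioo (0 : ℝ) 1)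
    (hσ : 0 < σ) (hα : α ∈ Set.Ioo (0 : ℝ) 1)
    (hz : cdf (gaussianReal 0 1) z = 1 - α / 2)
    (nx ny : ℕ → ℕ) (hnx : ∀ k, 0 < nx k) (hny : ∀ k, 0 < ny k)
    (hnxTop : Tendsto nx atTop atTop) (hnyTop : Tendsto ny atTop atTop)
    (X Y Lx Ly : ℕ → Ω → ℝ)
    (hmX : ∀ k, Measurable (X k)) (hmY : ∀ k, Measurable (Y k))
    (hmLx : ∀ k, Measurable (Lx k)) (hmLy : ∀ k, Measurable (Ly k))
    (hlawX : ∀ k, Measure.map (X k) P = binomialReal (nx k) px hpx.2.le)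
    (hlawY : ∀ k, Measure.map (Y k) P = binomialReal (ny k) py hpy.2.le)
    (hlawLx : ∀ k, Measure.map (Lx k) P = gaussianReal 0 (Real.toNNReal (σ ^ 2)))
    (hlawLy : ∀ k, Measure.map (Ly k) P = gaussianReal 0 (Real.toNNReal (σ ^ 2)))
    (hindep : ∀ k, iIndepFun ![X k, Y k, Lx k, Ly k] P) :
    Tendsto
      (fun k =>
        (P {ω |
          |((X k ω + Lx k ω) / (nx k : ℝ)) / ((Y k ω + Ly k ω) / (ny k : ℝ)) - px / py| ≤
            z * (((X k ω + Lx k ω) / (nx k : ℝ)) / ((Y k ω + Ly k ω) / (ny k : ℝ)) *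
              Real.sqrt (1 / (X k ω + Lx k ω) - 1 / (nx k : ℝ) +
                1 / (Y k ω + Ly k ω) - 1 / (ny k : ℝ) +
                σ ^ 2 * (1 / (X k ω + Lx k ω) ^ 2 + 1 / (Y k ω + Ly k ω) ^ 2)))}).toReal)
      atTop (nhds (1 - α)) := by
  obtain ⟨hx0, hx1⟩ := id hpx
  obtain ⟨hy0, hy1⟩ := id hpy
  have hcx : 0 < 1 / px - 1 := by rw [sub_pos, lt_div_iff₀ hx0]; linarith
  have hcy : 0 < 1 / py - 1 := by rw [sub_pos, lt_div_iff₀ hy0]; linarith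
  have hnR : ∀ k, (0 : ℝ) < nx k := fun k => by exact_mod_cast hnx k
  have hmR : ∀ k, (0 : ℝ) < ny k := fun k => by exact_mod_cast hny k
  have hrn : Tendsto (fun k => (√(nx k))⁻¹) atTop (nhds 0) :=
    tendsto_inv_atTop_zero.comp (Real.tendsto_sqrt_atTop.comp
      (tendsto_natCast_atTop_atTop.comp hnxTop))
  have hrm : Tendsto (fun k => (√(ny k))⁻¹) atTop (nhds 0) :=
    tendsto_inv_atTop_zero.comp (Real.tendsto_sqrt_atTop.comp
      (tendsto_natCast_atTop_atTop.comp hnyTop))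
  have mU := rr_small P _ (rr_clt P px hpx nx hnxTop X hmX hlawX) _ hrn
  have mV := rr_small P _ (rr_clt P py hpy ny hnyTop Y hmY hlawY) _ hrm
  have noise : ∀ L : ℕ → Ω → ℝ, (∀ k, Measurable (L k)) →
      (∀ k, Measure.map (L k) P = gaussianReal 0 (Real.toNNReal (σ ^ 2))) →
      TendstoInDistribution L atTop (id : ℝ → ℝ) (fun _ => P)
        (gaussianReal 0 (Real.toNNReal (σ ^ 2))) := by
    intro L hm hl
    refine tendstoInDistribution_of_identDistrib 0 (fun j => ?_) ?_
    · exact ⟨(hm 0).aemeasurable, (hm j).aemeasurable, by rw [hl, hl]⟩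
    · exact ⟨(hm 0).aemeasurable, aemeasurable_id, by rw [hl, Measure.map_id]⟩
  have mLx := rr_small P _ (noise Lx hmLx hlawLx) _ hrn
  have mLy := rr_small P _ (noise Ly hmLy hlawLy) _ hrm
  let s : ℕ → ℝ := fun k => √((1 / px - 1) / nx k + (1 / py - 1) / ny k)
  let a : ℕ → ℝ := fun k => √(1 / px - 1) / (√(nx k) * s k)
  let b : ℕ → ℝ := fun k => √(1 / py - 1) / (√(ny k) * s k)
  have hs : ∀ k, 0 < s k := fun k => by
    have := hnR k
    have := hmR k
    exact Real.sqrt_pos.2 (by positivity)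
  have hab : ∀ k, a k ^ 2 + b k ^ 2 = 1 := fun k => rr_ab _ _ _ _ hcx hcy (hnR k) (hmR k)
  have hcpt : IsCompact (Set.Icc (-1 : ℝ) 1 ×ˢ Set.Icc (-1 : ℝ) 1) := isCompact_Icc.prod isCompact_Icc
  refine tendsto_of_subseq_tendsto fun ns hns => ?_
  obtain ⟨⟨a0, b0⟩, -, φ, hφ, hlim⟩ := hcpt.tendsto_subseq (x := fun k => (a (ns k), b (ns k)))
    (fun k => by
      have := hab (ns k)
      refine ⟨abs_le.1 (abs_le_one_iff_mul_self_le_one.2 ?_),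
        abs_le.1 (abs_le_one_iff_mul_self_le_one.2 ?_)⟩ <;>
      nlinarith [sq_nonneg (a (ns k)), sq_nonneg (b (ns k))])
  have g0 : Tendsto (fun k => ns (φ k)) atTop atTop := hns.comp hφ.tendsto_atTop
  obtain ⟨f1, hf1, hU⟩ := (mU.comp g0).exists_seq_tendsto_ae
  have g1 : Tendsto (fun k => ns (φ (f1 k))) atTop atTop := g0.comp hf1.tendsto_atTop
  obtain ⟨f2, hf2, hV⟩ := (mV.comp g1).exists_seq_tendsto_ae
  have g2 : Tendsto (fun k => ns (φ (f1 (f2 k)))) atTop atTop := g1.comp hf2.tendsto_atTop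
  obtain ⟨f3, hf3, hLx⟩ := (mLx.comp g2).exists_seq_tendsto_ae
  have g3 : Tendsto (fun k => ns (φ (f1 (f2 (f3 k))))) atTop atTop := g2.comp hf3.tendsto_atTop
  obtain ⟨f4, hf4, hLy⟩ := (mLy.comp g3).exists_seq_tendsto_ae
  have g4 : Tendsto (fun k => ns (φ (f1 (f2 (f3 (f4 k)))))) atTop atTop :=
    g3.comp hf4.tendsto_atTop
  have q4 := hf4.tendsto_atTop
  have q3 : Tendsto (fun k => f3 (f4 k)) atTop atTop := hf3.tendsto_atTop.comp q4
  have q2 : Tendsto (fun k => f2 (f3 (f4 k))) atTop atTop := hf2.tendsto_atTop.comp q3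
  have q1 : Tendsto (fun k => f1 (f2 (f3 (f4 k)))) atTop atTop := hf1.tendsto_atTop.comp q2
  refine ⟨fun k => φ (f1 (f2 (f3 (f4 k)))), ?_⟩
  exact rr_core P px py σ α z hpx hpy hα hz
    (fun k => nx (ns (φ (f1 (f2 (f3 (f4 k))))))) (fun k => ny (ns (φ (f1 (f2 (f3 (f4 k)))))))
    (fun k => hnx _) (fun k => hny _) (hnxTop.comp g4) (hnyTop.comp g4)
    (fun k => X (ns (φ (f1 (f2 (f3 (f4 k))))))) (fun k => Y (ns (φ (f1 (f2 (f3 (f4 k)))))))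
    (fun k => Lx (ns (φ (f1 (f2 (f3 (f4 k))))))) (fun k => Ly (ns (φ (f1 (f2 (f3 (f4 k)))))))
    (fun k => hmX _) (fun k => hmY _) (fun k => hmLx _) (fun k => hmLy _)
    (fun k => hlawX _) (fun k => hlawY _)
    (fun k => (hindep _).indepFun (i := 0) (j := 1) (by decide))
    (fun k => s (ns (φ (f1 (f2 (f3 (f4 k)))))))
    (fun k => a (ns (φ (f1 (f2 (f3 (f4 k)))))))
    (fun k => b (ns (φ (f1 (f2 (f3 (f4 k)))))))
    (fun k => hs _) (fun k => rfl) (fun k => rfl) (fun k => hab _) a0 b0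
    (((continuous_fst.tendsto _).comp hlim).comp q1)
    (((continuous_snd.tendsto _).comp hlim).comp q1)
    (by filter_upwards [hU] with ω h using h.comp q2)
    (by filter_upwards [hV] with ω h using h.comp q3)
    (by filter_upwards [hLx] with ω h using h.comp q4)
    (by filter_upwards [hLy] with ω h using h)
end
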